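/- arXiv:2602.08780 — 4 statements merged into one kernel-verified Lean document; each statement's English description precedes it below -/
import Mathlib

section
/- Fix natural numbers N, t, s with t + s ≤ N. Then (α, β) satisfies the (t, s) semi-insdel orthogonality conditions (C3) if and only if (α, β) satisfies the (t+s)-deletion orthogonality conditions. (This is the combinatorial core of Lemma 2: the semi-insdel conditions for s deletions followed by t insertions are equivalent to the (t+s)-deletion conditions of Aydin et al.) -/
open Finset

theorem pascal_sum_aux (N M : ℕ) (h : M < N) (g : ℕ → ℂ) :
    ∑ k ∈ Finset.range (N + 1), ((M + 1).choose k : ℂ) * g k =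
      ∑ k ∈ Finset.range (N + 1), (M.choose k : ℂ) * g k +
      ∑ k ∈ Finset.range (N + 1), (M.choose k : ℂ) * g (k + 1) := by
  rw [Finset.sum_range_succ', Finset.sum_range_succ' (fun k => (M.choose k : ℂ) * g k),
    Finset.sum_range_succ (fun k => (M.choose k : ℂ) * g (k + 1)), Nat.choose_eq_zero_of_lt h]
  simp only [Nat.choose_succ_succ', Nat.cast_add, add_mul, Finset.sum_add_distrib,
    Nat.choose_zero_right]
  push_cast
  ring

theorem pascal_ind_aux (N T : ℕ) (hT : T ≤ N) (f : ℕ → ℕ → ℂ)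
    (h : ∀ a b, a ≤ T → b ≤ T →
      ∑ k ∈ Finset.range (N + 1), ((N - T).choose k : ℂ) * f (k + a) (k + b) = 0) (j : ℕ) :
    ∀ a b, j ≤ T → a ≤ T - j → b ≤ T - j →
      ∑ k ∈ Finset.range (N + 1), ((N - T + j).choose k : ℂ) * f (k + a) (k + b) = 0 := by
  induction j with
  | zero => intro a b _ ha hb; exact h a b ha hb
  | succ j ih =>
    intro a b hj ha hb
    have := pascal_sum_aux N (N - T + j) (by omega) (fun k => f (k + a) (k + b))
    rw [← Nat.add_assoc, this, ih a b (by omega) (by omega) (by omega)]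
    have h2 := ih (a + 1) (b + 1) (by omega) (by omega) (by omega)
    simp only [← Nat.add_assoc] at h2
    simp only [Nat.add_right_comm _ 1, h2, add_zero]

theorem semiInsdel_iff_deletion_orthogonality
    (N t s : ℕ) (hts : t + s ≤ N)
    (α β : ℕ → ℂ) (hα : ∀ k : ℕ, N < k → α k = 0) (hβ : ∀ k : ℕ, N < k → β k = 0) :
    (∀ j a' b' : ℕ, j ≤ t → a' ≤ t + s - j → b' ≤ t + s - j →
      ∑ k ∈ Finset.range (N + 1), ((N - t - s + j).choose k : ℂ) / ((Real.sqrt ((N.choose (k + a') * N.choose (k + b') : ℕ)) : ℝ) : ℂ) * ((starRingEnd ℂ) (α (k + a')) * β (k + b')) = 0) ↔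
    (∀ a' b' : ℕ, a' ≤ t + s → b' ≤ t + s →
      ∑ k ∈ Finset.range (N + 1), ((N - (t + s)).choose k : ℂ) / ((Real.sqrt ((N.choose (k + a') * N.choose (k + b') : ℕ)) : ℝ) : ℂ) * ((starRingEnd ℂ) (α (k + a')) * β (k + b')) = 0) := by
  constructor
  · intro h a b ha hb
    have := h 0 a b (Nat.zero_le _) ha hb
    rwa [Nat.sub_sub, Nat.add_zero] at this
  · intro h j a b hj ha hb
    have key := pascal_ind_aux N (t + s) hts
      (fun p q => ((Real.sqrt ((N.choose p * N.choose q : ℕ)) : ℝ) : ℂ)⁻¹ *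
        ((starRingEnd ℂ) (α p) * β q))
      (fun a b ha hb => by
        have := h a b ha hb
        simpa only [div_eq_mul_inv, mul_assoc] using this) j a b (by omega) ha hb
    rw [Nat.sub_sub]
    simpa only [div_eq_mul_inv, mul_assoc] using key
end

section
/- Fix natural numbers N, t, s with t + s ≤ N. Then (α, β) satisfies the (t, s) full-insdel orthogonality conditions (C5) if and only if (α, β) satisfies the (t+s)-deletion orthogonality conditions. (This is the combinatorial core of Theorem 4: the full-insdel conditions for t insertions followed by s deletions are equivalent to the (t+s)-deletion conditions of Aydin et al.) -/
open Finset

theorem pascal_step (N M a b : ℕ) (F : ℕ → ℕ → ℂ) (hF : ∀ i j, N < i → F i j = 0) :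
    ∑ k ∈ Finset.range (N + 1), ((M + 1).choose k : ℂ) * F (k + a) (k + b) =
    ∑ k ∈ Finset.range (N + 1), (M.choose k : ℂ) * F (k + a) (k + b) +
    ∑ k ∈ Finset.range (N + 1), (M.choose k : ℂ) * F (k + (a + 1)) (k + (b + 1)) := by
  rw [Finset.sum_range_succ', Finset.sum_range_succ' (fun k => (M.choose k : ℂ) * F (k + a) (k + b)),
    Finset.sum_range_succ (fun k => (M.choose k : ℂ) * F (k + (a + 1)) (k + (b + 1))),
    hF (N + (a + 1)) _ (by omega)]
  have h : ∀ k ∈ Finset.range N, ((M + 1).choose (k + 1) : ℂ) * F (k + 1 + a) (k + 1 + b) =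
      (M.choose (k + 1) : ℂ) * F (k + 1 + a) (k + 1 + b) +
      (M.choose k : ℂ) * F (k + (a + 1)) (k + (b + 1)) := by
    intro k _
    rw [Nat.choose_succ_succ, show k + (a + 1) = k + 1 + a by omega,
      show k + (b + 1) = k + 1 + b by omega]
    push_cast
    ring
  rw [Finset.sum_congr rfl h, Finset.sum_add_distrib]
  simp
  ring

theorem pascal_all (N M m : ℕ) (F : ℕ → ℕ → ℂ) (hF : ∀ i j, N < i → F i j = 0)
    (h : ∀ a b, a ≤ m → b ≤ m →
      ∑ k ∈ Finset.range (N + 1), (M.choose k : ℂ) * F (k + a) (k + b) = 0) (d : ℕ) :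
    ∀ a b, a + d ≤ m → b + d ≤ m →
      ∑ k ∈ Finset.range (N + 1), ((M + d).choose k : ℂ) * F (k + a) (k + b) = 0 := by
  induction d with
  | zero => exact h
  | succ d ih =>
    intro a b ha hb
    rw [← Nat.add_assoc, pascal_step N (M + d) a b F hF, ih a b (by omega) (by omega),
      ih (a + 1) (b + 1) (by omega) (by omega), add_zero]

theorem fullInsdel_iff_deletion_orthogonality
    (N t s : ℕ) (hts : t + s ≤ N)
    (α β : ℕ → ℂ) (hα : ∀ k : ℕ, N < k → α k = 0) (hβ : ∀ k : ℕ, N < k → β k = 0) :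
    (∀ ℓ j a' b' : ℕ, ℓ ≤ min s t → j ≤ t - ℓ → a' ≤ t + s - 2 * ℓ - j → b' ≤ t + s - 2 * ℓ - j →
      ∑ k ∈ Finset.range (N + 1), ((N - t - s + 2 * ℓ + j).choose k : ℂ) / ((Real.sqrt ((N.choose (k + a') * N.choose (k + b') : ℕ)) : ℝ) : ℂ) * ((starRingEnd ℂ) (α (k + a')) * β (k + b')) = 0) ↔
    (∀ a' b' : ℕ, a' ≤ t + s → b' ≤ t + s →
      ∑ k ∈ Finset.range (N + 1), ((N - (t + s)).choose k : ℂ) / ((Real.sqrt ((N.choose (k + a') * N.choose (k + b') : ℕ)) : ℝ) : ℂ) * ((starRingEnd ℂ) (α (k + a')) * β (k + b')) = 0) := by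
  constructor
  · intro h a b ha hb
    have := h 0 0 a b (by omega) (by omega) (by omega) (by omega)
    simpa [Nat.sub_sub] using this
  · intro h ℓ j a b hl hj ha hb
    have hl' := le_min_iff.mp hl
    have := pascal_all N (N - (t + s)) (t + s)
      (fun x y => (starRingEnd ℂ (α x) * β y) /
        ((Real.sqrt ((N.choose x * N.choose y : ℕ)) : ℝ) : ℂ))
      (by intro i j hi; simp [hα i hi])
      (by
        intro a b ha hb
        rw [← h a b ha hb]
        exact Finset.sum_congr rfl (fun k _ => by ring))
      (2 * ℓ + j) a b (by omega) (by omega)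
    rw [← this, show N - t - s + 2 * ℓ + j = N - (t + s) + (2 * ℓ + j) by omega]
    exact Finset.sum_congr rfl (fun k _ => by ring)
end

section
/- Fix natural numbers N, t, s with t + s ≤ N. Then (α, β) satisfies the (t, s) full-insdel non-deformation conditions (C6) if and only if (α, β) satisfies the (t+s)-deletion non-deformation conditions. (This is the combinatorial core of Theorem 4: the full-insdel conditions for t insertions followed by s deletions are equivalent to the (t+s)-deletion conditions of Aydin et al.) -/
open Finset

theorem pascal_aux (N M : ℕ) (g : ℕ → ℕ → ℂ) (hg : ∀ x y, N < x → g x y = 0) (a b : ℕ) :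
    ∑ k ∈ Finset.range (N + 1), ((M + 1).choose k : ℂ) * g (k + a) (k + b) =
    ∑ k ∈ Finset.range (N + 1), (M.choose k : ℂ) * g (k + a) (k + b) +
    ∑ k ∈ Finset.range (N + 1), (M.choose k : ℂ) * g (k + (a + 1)) (k + (b + 1)) := by
  rw [Finset.sum_range_succ' (fun k => ((M + 1).choose k : ℂ) * g (k + a) (k + b)),
    Finset.sum_range_succ' (fun k => (M.choose k : ℂ) * g (k + a) (k + b)),
    Finset.sum_range_succ (fun k => (M.choose k : ℂ) * g (k + (a + 1)) (k + (b + 1))),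
    hg (N + (a + 1)) _ (by omega)]
  have : ∀ k, ((M + 1).choose (k + 1) : ℂ) * g (k + 1 + a) (k + 1 + b) =
      (M.choose k : ℂ) * g (k + (a + 1)) (k + (b + 1)) +
      (M.choose (k + 1) : ℂ) * g (k + 1 + a) (k + 1 + b) := by
    intro k
    rw [Nat.choose_succ_succ, show k + (a + 1) = k + 1 + a by ring,
      show k + (b + 1) = k + 1 + b by ring]
    push_cast
    ring
  simp only [this, Finset.sum_add_distrib, Nat.choose_zero_right]
  ring

theorem induct_aux (N M D : ℕ) (g : ℕ → ℕ → ℂ) (hg : ∀ x y, N < x → g x y = 0)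
    (h : ∀ a b, a ≤ D → b ≤ D →
      ∑ k ∈ Finset.range (N + 1), (M.choose k : ℂ) * g (k + a) (k + b) = 0) (d : ℕ) :
    ∀ a b, a + d ≤ D → b + d ≤ D →
      ∑ k ∈ Finset.range (N + 1), ((M + d).choose k : ℂ) * g (k + a) (k + b) = 0 := by
  induction d with
  | zero => exact h
  | succ d ih =>
    intro a b ha hb
    rw [← add_assoc, pascal_aux N (M + d) g hg, ih a b (by omega) (by omega),
      ih (a + 1) (b + 1) (by omega) (by omega), add_zero]

theorem fullInsdel_iff_deletion_nonDeformation
    (N t s : ℕ) (hts : t + s ≤ N)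
    (α β : ℕ → ℂ) (hα : ∀ k : ℕ, N < k → α k = 0) (hβ : ∀ k : ℕ, N < k → β k = 0) :
    (∀ ℓ j a' b' : ℕ, ℓ ≤ min s t → j ≤ t - ℓ → a' ≤ t + s - 2 * ℓ - j → b' ≤ t + s - 2 * ℓ - j →
      ∑ k ∈ Finset.range (N + 1), ((N - t - s + 2 * ℓ + j).choose k : ℂ) / ((Real.sqrt ((N.choose (k + a') * N.choose (k + b') : ℕ)) : ℝ) : ℂ) * ((starRingEnd ℂ) (α (k + a')) * α (k + b') - (starRingEnd ℂ) (β (k + a')) * β (k + b')) = 0) ↔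
    (∀ a' b' : ℕ, a' ≤ t + s → b' ≤ t + s →
      ∑ k ∈ Finset.range (N + 1), ((N - (t + s)).choose k : ℂ) / ((Real.sqrt ((N.choose (k + a') * N.choose (k + b') : ℕ)) : ℝ) : ℂ) * ((starRingEnd ℂ) (α (k + a')) * α (k + b') - (starRingEnd ℂ) (β (k + a')) * β (k + b')) = 0) := by
  constructor
  · intro h a b ha hb
    have := h 0 0 a b (by omega) (by omega) (by omega) (by omega)
    rw [show N - t - s + 2 * 0 + 0 = N - (t + s) by omega] at this
    exact this
  · intro h ℓ j a b hl hj ha hb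
    have hl1 : ℓ ≤ s := hl.trans (min_le_left _ _)
    have hl2 : ℓ ≤ t := hl.trans (min_le_right _ _)
    have key := induct_aux N (N - (t + s)) (t + s)
      (fun x y => ((Real.sqrt ((N.choose x * N.choose y : ℕ)) : ℝ) : ℂ)⁻¹ *
        ((starRingEnd ℂ) (α x) * α y - (starRingEnd ℂ) (β x) * β y))
      (by intro x y hx; simp [hα x hx, hβ x hx])
      (by
        intro a b ha hb
        rw [← h a b ha hb]
        refine Finset.sum_congr rfl fun k _ => ?_
        rw [div_eq_mul_inv, mul_assoc])
      (2 * ℓ + j) a b (by omega) (by omega)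
    rw [show N - t - s + 2 * ℓ + j = N - (t + s) + (2 * ℓ + j) by omega, ← key]
    refine Finset.sum_congr rfl fun k _ => ?_
    rw [div_eq_mul_inv, mul_assoc]
end

section
/- Fix natural numbers N, t, s with t + s ≤ N. Then (α, β) satisfies the (t+s)-insertion non-deformation conditions (C2) if and only if (α, β) satisfies the (t, s) semi-insdel non-deformation conditions (C4). (Hence for permutation-invariant codes, correcting t insertions together with s deletions imposes the same non-deformation constraints as correcting t+s pure insertions.) -/
open Finset

lemma pascal_aux_s13 (N m a b : ℕ) (G : ℕ → ℕ → ℂ) (hG : ∀ p q, N < p → G p q = 0) :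
    ∑ k ∈ Finset.range (N + 1), ((m + 1).choose k : ℂ) * G (k + a) (k + b) =
    ∑ k ∈ Finset.range (N + 1), (m.choose k : ℂ) * G (k + a) (k + b) +
    ∑ k ∈ Finset.range (N + 1), (m.choose k : ℂ) * G (k + (a + 1)) (k + (b + 1)) := by
  rw [Finset.sum_range_succ', Finset.sum_range_succ' (fun k => (m.choose k : ℂ) * G (k + a) (k + b)),
    Finset.sum_range_succ (fun k => (m.choose k : ℂ) * G (k + (a + 1)) (k + (b + 1))),
    hG (N + (a + 1)) _ (by omega)]
  have h : ∀ k ∈ Finset.range N, ((m + 1).choose (k + 1) : ℂ) * G (k + 1 + a) (k + 1 + b) =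
      (m.choose (k + 1) : ℂ) * G (k + 1 + a) (k + 1 + b) +
      (m.choose k : ℂ) * G (k + (a + 1)) (k + (b + 1)) := by
    intro k _
    rw [Nat.choose_succ_succ, show k + (a + 1) = k + 1 + a by ring,
      show k + (b + 1) = k + 1 + b by ring]
    push_cast
    ring
  rw [Finset.sum_congr rfl h, Finset.sum_add_distrib]
  simp only [Nat.choose_zero_right]
  ring

lemma zero_aux (N M u : ℕ) (G : ℕ → ℕ → ℂ) (hG : ∀ p q, N < p → G p q = 0)
    (h0 : ∀ a b, a ≤ u → b ≤ u →
      ∑ k ∈ Finset.range (N + 1), (M.choose k : ℂ) * G (k + a) (k + b) = 0) (j : ℕ) :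
    ∀ a b, j ≤ u → a ≤ u - j → b ≤ u - j →
      ∑ k ∈ Finset.range (N + 1), ((M + j).choose k : ℂ) * G (k + a) (k + b) = 0 := by
  induction j with
  | zero => intro a b _ ha hb; exact h0 a b ha hb
  | succ j ih =>
    intro a b hj ha hb
    rw [← add_assoc, pascal_aux_s13 N (M + j) a b G hG, ih a b (by omega) (by omega) (by omega),
      ih (a + 1) (b + 1) (by omega) (by omega) (by omega), add_zero]

theorem insertion_iff_semiInsdel_nonDeformation
    (N t s : ℕ) (hts : t + s ≤ N)
    (α β : ℕ → ℂ) (hα : ∀ k : ℕ, N < k → α k = 0) (hβ : ∀ k : ℕ, N < k → β k = 0) :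
    (∀ j a' b' : ℕ, j ≤ t + s → a' ≤ t + s - j → b' ≤ t + s - j →
      ∑ k ∈ Finset.range (N + 1), ((N - (t + s) + j).choose k : ℂ) / ((Real.sqrt ((N.choose (k + a') * N.choose (k + b') : ℕ)) : ℝ) : ℂ) * ((starRingEnd ℂ) (α (k + a')) * α (k + b') - (starRingEnd ℂ) (β (k + a')) * β (k + b')) = 0) ↔
    (∀ j a' b' : ℕ, j ≤ t → a' ≤ t + s - j → b' ≤ t + s - j →
      ∑ k ∈ Finset.range (N + 1), ((N - t - s + j).choose k : ℂ) / ((Real.sqrt ((N.choose (k + a') * N.choose (k + b') : ℕ)) : ℝ) : ℂ) * ((starRingEnd ℂ) (α (k + a')) * α (k + b') - (starRingEnd ℂ) (β (k + a')) * β (k + b')) = 0) := by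
  simp only [Nat.sub_sub]
  constructor
  · intro h j a b hj ha hb
    exact h j a b (by omega) ha hb
  · intro h j a b hj ha hb
    have key := zero_aux N (N - (t + s)) (t + s)
      (fun p q => ((Real.sqrt ((N.choose p * N.choose q : ℕ)) : ℝ) : ℂ)⁻¹ *
        ((starRingEnd ℂ) (α p) * α q - (starRingEnd ℂ) (β p) * β q))
      (by intro p q hp; simp [hα p hp, hβ p hp])
      (by
        intro a b ha hb
        have := h 0 a b (by omega) (by omega) (by omega)
        simpa only [div_eq_mul_inv, mul_assoc, add_zero] using this) j a b hj ha hb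
    simpa only [div_eq_mul_inv, mul_assoc] using key
end
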